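/- Let Z be a standard Gaussian random variable (law N(0,1)) and let α ≥ 0. Then E[η(Z; α)²] = 2(1 + α²)·Φ(−α) − 2α·φ(α), where φ(z) = exp(−z²/2)/√(2π) and Φ(z) = ∫_{−∞}^z φ(t) dt. -/

import Mathlib

/-!
The integrand `η(z; α)² φ(z)` is even and vanishes on `[-α, α]`, so its integral is twice
`∫_{z > α} (z - α)² φ(z) dz`. Since `φ'(z) = -z φ(z)`, every `p' - z p` with `p` a polynomial
integrates against `φ` over `(α, ∞)` to `-p(α) φ(α)`; the choice `p = 2α - z` turns
`(z - α)² = (1 + α²) + (p' - z p)` into the closed form of the tail integral.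
-/

open MeasureTheory ProbabilityTheory

/-- Soft thresholding operator `η(x; θ)`. -/
noncomputable def softThresh (x θ : ℝ) : ℝ :=
  if x > θ then x - θ else if x < -θ then x + θ else 0

/-- The standard normal density `φ`. -/
noncomputable def stdGaussianPdf (z : ℝ) : ℝ :=
  Real.exp (-z^2 / 2) / Real.sqrt (2 * Real.pi)

/-- The standard normal cumulative distribution function `Φ`. -/
noncomputable def stdGaussianCdf (z : ℝ) : ℝ :=
  ∫ t in Set.Iic z, stdGaussianPdf t

open Set Filter Polynomial
open scoped Topology

section SoftThresh

variable {θ x : ℝ}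

lemma softThresh_of_lt (h : θ < x) : softThresh x θ = x - θ :=
  if_pos h

lemma softThresh_of_abs_le (h : |x| ≤ θ) : softThresh x θ = 0 := by
  rw [softThresh, if_neg (abs_le.mp h).2.not_gt, if_neg (abs_le.mp h).1.not_gt]

lemma softThresh_odd (hθ : 0 ≤ θ) : (softThresh · θ).Odd := fun x ↦ by
  simp only [softThresh]
  split_ifs <;> linarith

end SoftThresh

lemma integral_eq_two_mul_integral_Ioi_of_even {f : ℝ → ℝ} (hf : f.Even) :
    ∫ x, f x = 2 * ∫ x in Ioi 0, f x := by
  rw [← integral_comp_abs]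
  congr with x
  rcases abs_choice x with h | h <;> rw [h]
  exact (hf x).symm

lemma integral_comp_softThresh_mul_of_even {f g : ℝ → ℝ} {θ : ℝ} (hf : f.Even) (hf₀ : f 0 = 0)
    (hg : g.Even) (hθ : 0 ≤ θ) :
    ∫ x, f (softThresh x θ) * g x = 2 * ∫ x in Ioi θ, f (x - θ) * g x := by
  have h_even : (fun x ↦ f (softThresh x θ) * g x).Even :=
    (hf.comp_odd (softThresh_odd hθ)).mul_even hg
  have h_zero : ∀ x ∈ Ioi 0 \ Ioi θ, f (softThresh x θ) * g x = 0 := fun x ⟨hx₀, hxθ⟩ ↦ by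
    have hx : |x| ≤ θ := (abs_of_pos hx₀).trans_le (not_lt.mp hxθ)
    rw [softThresh_of_abs_le hx, hf₀, zero_mul]
  calc ∫ x, f (softThresh x θ) * g x
    _ = 2 * ∫ x in Ioi 0, f (softThresh x θ) * g x :=
      integral_eq_two_mul_integral_Ioi_of_even h_even
    _ = 2 * ∫ x in Ioi θ, f (softThresh x θ) * g x := by
      rw [setIntegral_eq_of_subset_of_forall_sdiff_eq_zero measurableSet_Ioi
        (Ioi_subset_Ioi hθ) h_zero]
    _ = 2 * ∫ x in Ioi θ, f (x - θ) * g x := by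
      congr 1
      exact setIntegral_congr_fun measurableSet_Ioi fun x hx ↦ by
        simp only [softThresh_of_lt hx]

lemma stdGaussianPdf_even : stdGaussianPdf.Even := fun z ↦ by
  simp only [stdGaussianPdf, neg_sq]

lemma gaussianPDFReal_zero_one : gaussianPDFReal 0 1 = stdGaussianPdf := by
  ext z
  simp [gaussianPDFReal, stdGaussianPdf, div_eq_inv_mul]

lemma integral_gaussianReal_zero_one {E : Type*} [NormedAddCommGroup E] [NormedSpace ℝ E]
    (f : ℝ → E) :
    ∫ z, f z ∂(gaussianReal 0 1) = ∫ z, stdGaussianPdf z • f z := by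
  rw [integral_gaussianReal_eq_integral_smul one_ne_zero, gaussianPDFReal_zero_one]

lemma hasDerivAt_stdGaussianPdf (z : ℝ) :
    HasDerivAt stdGaussianPdf (-z * stdGaussianPdf z) z := by
  have h_exponent : HasDerivAt (fun x : ℝ ↦ -x ^ 2 / 2) (-z) z :=
    ((hasDerivAt_pow 2 z).neg.div_const 2).congr_deriv (by norm_num; ring)
  refine (h_exponent.exp.div_const (√(2 * Real.pi))).congr_deriv ?_
  unfold stdGaussianPdf
  ring

lemma integral_Ioi_stdGaussianPdf (a : ℝ) :
    ∫ x in Ioi a, stdGaussianPdf x = stdGaussianCdf (-a) := by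
  simp only [stdGaussianCdf, ← integral_comp_neg_Ioi, stdGaussianPdf_even _]

lemma integrable_pow_mul_stdGaussianPdf (n : ℕ) :
    Integrable fun x ↦ x ^ n * stdGaussianPdf x := by
  have h_rpow : Integrable fun x : ℝ ↦ x ^ (n : ℝ) * Real.exp (-(1 / 2) * x ^ 2) :=
    integrable_rpow_mul_exp_neg_mul_sq (by norm_num) (by linarith [n.cast_nonneg (α := ℝ)])
  convert h_rpow.div_const (√(2 * Real.pi)) using 2 with x
  rw [stdGaussianPdf, Real.rpow_natCast]
  ring_nf

lemma integrable_eval_mul_stdGaussianPdf (p : ℝ[X]) :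
    Integrable fun x ↦ p.eval x * stdGaussianPdf x := by
  simp_rw [eval_eq_sum_range, Finset.sum_mul, mul_assoc]
  exact integrable_finsetSum _ fun n _ ↦ (integrable_pow_mul_stdGaussianPdf n).const_mul _

lemma hasDerivAt_eval_mul_stdGaussianPdf (p : ℝ[X]) (x : ℝ) :
    HasDerivAt (fun x ↦ p.eval x * stdGaussianPdf x)
      ((derivative p - X * p).eval x * stdGaussianPdf x) x := by
  refine ((p.hasDerivAt x).mul (hasDerivAt_stdGaussianPdf x)).congr_deriv ?_
  rw [eval_sub, eval_mul, eval_X]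
  ring

lemma integral_Ioi_derivative_sub_X_mul_mul_stdGaussianPdf (p : ℝ[X]) (a : ℝ) :
    ∫ x in Ioi a, (derivative p - X * p).eval x * stdGaussianPdf x
      = -(p.eval a * stdGaussianPdf a) := by
  have h_deriv := hasDerivAt_eval_mul_stdGaussianPdf p
  have h_int := (integrable_eval_mul_stdGaussianPdf (derivative p - X * p)).integrableOn
    (s := Ioi a)
  have h_lim : Tendsto (fun x ↦ p.eval x * stdGaussianPdf x) atTop (𝓝 0) :=
    tendsto_zero_of_hasDerivAt_of_integrableOn_Ioi (fun x _ ↦ h_deriv x) h_int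
      (integrable_eval_mul_stdGaussianPdf p).integrableOn
  rw [integral_Ioi_of_hasDerivAt_of_tendsto' (fun x _ ↦ h_deriv x) h_int h_lim, zero_sub]

lemma integral_Ioi_sub_sq_mul_stdGaussianPdf (a : ℝ) :
    ∫ x in Ioi a, (x - a) ^ 2 * stdGaussianPdf x
      = (1 + a ^ 2) * stdGaussianCdf (-a) - a * stdGaussianPdf a := by
  let p : ℝ[X] := C (2 * a) - X
  have h_split : ∀ x, (x - a) ^ 2 * stdGaussianPdf x
      = (1 + a ^ 2) * stdGaussianPdf x + (derivative p - X * p).eval x * stdGaussianPdf x := by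
    intro x
    simp only [p, derivative_sub, derivative_C, derivative_X, eval_sub, eval_mul, eval_X, eval_C,
      eval_zero, eval_one]
    ring
  have h_pdf : Integrable stdGaussianPdf := by
    simpa using integrable_pow_mul_stdGaussianPdf 0
  simp_rw [h_split]
  rw [integral_add (h_pdf.const_mul _).integrableOn
      (integrable_eval_mul_stdGaussianPdf _).integrableOn, integral_const_mul,
    integral_Ioi_stdGaussianPdf, integral_Ioi_derivative_sub_X_mul_mul_stdGaussianPdf, eval_sub,
    eval_C, eval_X]
  ring

/-- For `Z ~ N(0,1)` and `α ≥ 0`,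
`E[η(Z; α)²] = 2(1 + α²)·Φ(−α) − 2α·φ(α)`. -/
theorem soft_thresholding_mse_at_zero_signal (α : ℝ) (hα : 0 ≤ α) :
    ∫ z, (softThresh z α)^2 ∂(gaussianReal 0 1)
      = 2 * (1 + α^2) * stdGaussianCdf (-α) - 2 * α * stdGaussianPdf α := by
  have h_sq : (fun x : ℝ ↦ x ^ 2).Even := fun x ↦ neg_sq x
  calc ∫ z, (softThresh z α)^2 ∂(gaussianReal 0 1)
    _ = ∫ z, (softThresh z α)^2 * stdGaussianPdf z := by
      simp only [integral_gaussianReal_zero_one, smul_eq_mul, mul_comm]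
    _ = 2 * ∫ z in Ioi α, (z - α)^2 * stdGaussianPdf z :=
      integral_comp_softThresh_mul_of_even h_sq (zero_pow two_ne_zero) stdGaussianPdf_even hα
    _ = 2 * (1 + α^2) * stdGaussianCdf (-α) - 2 * α * stdGaussianPdf α := by
      rw [integral_Ioi_sub_sq_mul_stdGaussianPdf]
      ring
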